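/- arXiv:2108.09367 — 4 statements merged into one kernel-verified Lean document; each statement's English description precedes it below -/
import Mathlib

section
/- Let G be a finite simple bipartite graph and let t be a vertex of G. The UIF position (G, t) is an N-position (a win for the player to move) if and only if every maximum matching of G saturates t. -/
variable {V : Type*}

/-- A matching of `G`: a set of edges of `G`, no two of which share an endpoint. -/
def IsMatching (G : SimpleGraph V) (M : Set (Sym2 V)) : Prop :=
  M ⊆ G.edgeSet ∧ M.Pairwise fun e f => ∀ v : V, v ∈ e → v ∉ f

/-- A maximum matching of `G`: a matching of maximum cardinality among all matchings of `G`. -/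
def IsMaxMatching (G : SimpleGraph V) (M : Set (Sym2 V)) : Prop :=
  IsMatching G M ∧ ∀ N : Set (Sym2 V), IsMatching G N → N.ncard ≤ M.ncard

/-- `M` saturates the vertex `v`: `v` is an endpoint of some edge of `M`. -/
def Saturates (M : Set (Sym2 V)) (v : V) : Prop := ∃ e ∈ M, v ∈ e

/-- N-positions of undirected impartial Geography with free deletion (UIF), played on the
induced subgraph of `G` on the vertex set `A` with the token on `t`: a move consists of
choosing `w ∈ A` adjacent to the token vertex `t` and `u ∈ A` adjacent to `w` (possibly
`u = t`), moving the token to `w` and deleting `u`.  A position is an N-position iff some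
legal move leads to a position that is not an N-position. -/
def uifN [DecidableEq V] (G : SimpleGraph V) : Finset V → V → Prop
  | A, t =>
    ∃ w ∈ A, ∃ u, ∃ _ : u ∈ A, G.Adj t w ∧ G.Adj w u ∧ ¬ uifN G (A.erase u) w
  termination_by A _ => A.card
  decreasing_by exact Finset.card_erase_lt_of_mem ‹u ∈ A›

/-!
Call a vertex essential if every maximum matching saturates it, that is, if deleting it lowers the
matching number. In a bipartite graph two adjacent vertices cannot both be inessential: an
alternating-path argument would give a maximum matching avoiding both, to which their edge could be
added.

If `t` is essential, the player to move goes to a partner `w` of `t` in a maximum matching and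
deletes `t`, which makes `w` inessential. If `t` is inessential, every move to `w` deleting `u`
leaves `w` essential: when `u` is inessential, its deletion keeps the neighbour `w` of `t`
essential; when `u` is essential, its deletion keeps `t` inessential, hence `w` is essential by
adjacency.
-/

theorem IsMatching.mono {G : SimpleGraph V} {M N : Set (Sym2 V)} (hN : IsMatching G N)
    (hMN : M ⊆ N) : IsMatching G M :=
  ⟨hMN.trans hN.1, hN.2.mono hMN⟩

theorem IsMatching.insert {G : SimpleGraph V} {M : Set (Sym2 V)} {x y : V} (hM : IsMatching G M)
    (hxy : G.Adj x y) (hx : ¬ Saturates M x) (hy : ¬ Saturates M y) :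
    IsMatching G (insert s(x, y) M) := by
  have avoids_edge : ∀ f ∈ M, ∀ v ∈ s(x, y), v ∉ f := by
    intro f hf v hv hvf
    rcases Sym2.mem_iff.1 hv with rfl | rfl
    exacts [hx ⟨f, hf, hvf⟩, hy ⟨f, hf, hvf⟩]
  refine ⟨Set.insert_subset hxy hM.1, hM.2.insert fun f hf _ => ?_⟩
  exact ⟨avoids_edge f hf, fun v hvf hv => avoids_edge f hf v hv hvf⟩

theorem subset_sym2_erase_of_not_saturates [DecidableEq V] {M : Finset (Sym2 V)} {A : Finset V}
    {v : V} (hMA : M ⊆ A.sym2) (hv : ¬ Saturates (M : Set (Sym2 V)) v) : M ⊆ (A.erase v).sym2 :=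
  fun e he => Finset.mem_sym2_iff.2 fun x hx =>
    Finset.mem_erase.2 ⟨fun h => hv ⟨e, he, h ▸ hx⟩, Finset.mem_sym2_iff.1 (hMA he) x hx⟩

theorem IsMatching.subset_sym2_erase_erase [DecidableEq V] {G : SimpleGraph V}
    {M : Finset (Sym2 V)} {A : Finset V} {x y : V} (hM : IsMatching G (M : Set (Sym2 V)))
    (hMA : M ⊆ A.sym2) (hxy : s(x, y) ∈ M) :
    M.erase s(x, y) ⊆ ((A.erase x).erase y).sym2 := by
  intro e he
  obtain ⟨hne, heM⟩ := Finset.mem_erase.1 he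
  have hdisj := hM.2 hxy heM hne.symm
  refine Finset.mem_sym2_iff.2 fun v hv => ?_
  have hvx : v ≠ x := fun h => hdisj x (Sym2.mem_mk_left x y) (h ▸ hv)
  have hvy : v ≠ y := fun h => hdisj y (Sym2.mem_mk_right x y) (h ▸ hv)
  exact Finset.mem_erase.2 ⟨hvy, Finset.mem_erase.2 ⟨hvx, Finset.mem_sym2_iff.1 (hMA heM) v hv⟩⟩

open Classical in
/-- The matchings of the subgraph of `G` induced on the finite vertex set `A`, encoded as finite
sets of edges of `G` with both endpoints in `A`. -/
noncomputable def matchingsWithin (G : SimpleGraph V) (A : Finset V) : Finset (Finset (Sym2 V)) :=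
  {M ∈ A.sym2.powerset | IsMatching G (M : Set (Sym2 V))}

/-- The matching number of the subgraph of `G` induced on the finite vertex set `A`. -/
noncomputable def matchingNumber (G : SimpleGraph V) (A : Finset V) : ℕ :=
  (matchingsWithin G A).sup Finset.card

/-- A vertex is essential in the subgraph of `G` induced on `A` if deleting it lowers the matching
number, i.e. if every maximum matching saturates it. -/
def IsEssential [DecidableEq V] (G : SimpleGraph V) (A : Finset V) (v : V) : Prop :=
  matchingNumber G (A.erase v) < matchingNumber G A

section

variable {G : SimpleGraph V} {A B : Finset V}

theorem mem_matchingsWithin {M : Finset (Sym2 V)} :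
    M ∈ matchingsWithin G A ↔ M ⊆ A.sym2 ∧ IsMatching G (M : Set (Sym2 V)) := by
  simp [matchingsWithin]

theorem card_le_matchingNumber {M : Finset (Sym2 V)} (hM : M ∈ matchingsWithin G A) :
    M.card ≤ matchingNumber G A :=
  Finset.le_sup hM

theorem exists_card_eq_matchingNumber (G : SimpleGraph V) (A : Finset V) :
    ∃ M ∈ matchingsWithin G A, M.card = matchingNumber G A := by
  have empty_mem : ∅ ∈ matchingsWithin G A := mem_matchingsWithin.2 (by simp [IsMatching])
  obtain ⟨M, hM, hcard⟩ := Finset.exists_mem_eq_sup _ ⟨∅, empty_mem⟩ Finset.card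
  exact ⟨M, hM, hcard.symm⟩

theorem matchingsWithin_mono (hAB : A ⊆ B) : matchingsWithin G A ⊆ matchingsWithin G B := by
  intro M hM
  obtain ⟨hMA, hM⟩ := mem_matchingsWithin.1 hM
  exact mem_matchingsWithin.2 ⟨hMA.trans (Finset.sym2_mono hAB), hM⟩

theorem matchingNumber_mono (hAB : A ⊆ B) : matchingNumber G A ≤ matchingNumber G B :=
  Finset.sup_mono (matchingsWithin_mono hAB)

theorem mem_edgeSet_spanningCoe_induce_iff {e : Sym2 V} :
    e ∈ (G.induce (A : Set V)).spanningCoe.edgeSet ↔ e ∈ A.sym2 ∧ e ∈ G.edgeSet := by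
  induction e with
  | _ x y => simp [and_assoc, and_comm, and_left_comm]

theorem IsMatching.finite_of_spanningCoe_induce {M : Set (Sym2 V)}
    (hM : IsMatching (G.induce (A : Set V)).spanningCoe M) : M.Finite :=
  A.sym2.finite_toSet.subset fun _ he => (mem_edgeSet_spanningCoe_induce_iff.1 (hM.1 he)).1

theorem isMatching_spanningCoe_induce_iff {M : Finset (Sym2 V)} :
    IsMatching (G.induce (A : Set V)).spanningCoe (M : Set (Sym2 V)) ↔ M ∈ matchingsWithin G A := by
  simp only [mem_matchingsWithin, IsMatching, Set.subset_def, Finset.subset_iff, Finset.mem_coe,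
    mem_edgeSet_spanningCoe_induce_iff, forall_and, and_assoc]

theorem colorable_induce_mono {s t : Set V} {n : ℕ} (hst : s ⊆ t)
    (ht : (G.induce t).Colorable n) : (G.induce s).Colorable n :=
  ht.of_hom (G.induceHomOfLE hst).toHom

variable [DecidableEq V] {t u w x y : V}

theorem matchingNumber_erase_le : matchingNumber G (A.erase t) ≤ matchingNumber G A :=
  matchingNumber_mono (A.erase_subset t)

theorem matchingNumber_erase_erase_lt (hx : x ∈ A) (hy : y ∈ A) (hxy : G.Adj x y) :
    matchingNumber G ((A.erase x).erase y) < matchingNumber G A := by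
  obtain ⟨M, hM, hcard⟩ := exists_card_eq_matchingNumber G ((A.erase x).erase y)
  obtain ⟨hMA, hM⟩ := mem_matchingsWithin.1 hM
  have mem_of_saturates : ∀ v, Saturates (M : Set (Sym2 V)) v → v ∈ (A.erase x).erase y :=
    fun v ⟨e, he, hv⟩ => Finset.mem_sym2_iff.1 (hMA he) v hv
  have hx' : ¬ Saturates (M : Set (Sym2 V)) x := fun h => by simpa using mem_of_saturates x h
  have hy' : ¬ Saturates (M : Set (Sym2 V)) y := fun h => by simpa using mem_of_saturates y h
  have hnew : s(x, y) ∉ M := fun h => hx' ⟨_, h, Sym2.mem_mk_left x y⟩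
  have hins : insert s(x, y) M ∈ matchingsWithin G A := by
    refine mem_matchingsWithin.2 ⟨Finset.insert_subset (by simp [hx, hy]) ?_, ?_⟩
    · exact hMA.trans (Finset.sym2_mono ((Finset.erase_subset _ _).trans (A.erase_subset x)))
    · simpa only [Finset.coe_insert] using hM.insert hxy hx' hy'
  calc matchingNumber G ((A.erase x).erase y) < (insert s(x, y) M).card := by
        rw [Finset.card_insert_of_notMem hnew, hcard]; exact Nat.lt_succ_self _
    _ ≤ matchingNumber G A := card_le_matchingNumber hins

theorem IsEssential.mem (ht : IsEssential G A t) : t ∈ A := by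
  by_contra htA
  exact ht.ne (by rw [Finset.erase_eq_of_notMem htA])

theorem IsEssential.exists_adj (ht : IsEssential G A t) :
    ∃ y ∈ A, G.Adj t y ∧ matchingNumber G A = matchingNumber G ((A.erase t).erase y) + 1 := by
  obtain ⟨M, hM, hcard⟩ := exists_card_eq_matchingNumber G A
  obtain ⟨hMA, hM⟩ := mem_matchingsWithin.1 hM
  obtain ⟨e, he, hte⟩ : Saturates (M : Set (Sym2 V)) t := by
    by_contra hsat
    have hMt : M ∈ matchingsWithin G (A.erase t) :=
      mem_matchingsWithin.2 ⟨subset_sym2_erase_of_not_saturates hMA hsat, hM⟩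
    exact ht.not_ge (hcard ▸ card_le_matchingNumber hMt)
  obtain ⟨y, rfl⟩ := hte
  obtain ⟨htA, hyA⟩ := Finset.mk_mem_sym2_iff.1 (hMA he)
  have hty : G.Adj t y := hM.1 he
  have hrest : M.erase s(t, y) ∈ matchingsWithin G ((A.erase t).erase y) :=
    mem_matchingsWithin.2 ⟨hM.subset_sym2_erase_erase hMA he,
      hM.mono (Finset.coe_subset.2 (M.erase_subset _))⟩
  have hle := card_le_matchingNumber hrest
  have hlt := matchingNumber_erase_erase_lt htA hyA hty
  rw [Finset.card_erase_of_mem he] at hle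
  exact ⟨y, hyA, hty, by omega⟩

theorem matchingNumber_le_erase_add_one (G : SimpleGraph V) (A : Finset V) (u : V) :
    matchingNumber G A ≤ matchingNumber G (A.erase u) + 1 := by
  by_cases hu : IsEssential G A u
  · obtain ⟨y, -, -, heq⟩ := hu.exists_adj
    exact heq.trans_le (Nat.succ_le_succ matchingNumber_erase_le)
  · exact (not_lt.1 hu).trans (Nat.le_succ _)

/-- One double step `t, y, x` of an alternating path: a maximum matching avoiding `w` matches `t`
to `y`, and a maximum matching avoiding `t` matches `y` to `x`. -/
theorem IsEssential.exists_alternating_step (htw : IsEssential G (A.erase w) t)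
    (ht : ¬ IsEssential G A t) (hw : ¬ IsEssential G A w) :
    ∃ y ∈ A, ∃ x ∈ A, G.Adj t y ∧ G.Adj y x ∧
      ¬ IsEssential G ((A.erase t).erase y) x ∧ ¬ IsEssential G ((A.erase t).erase y) w ∧
      (x ≠ w → IsEssential G (((A.erase t).erase y).erase w) x) := by
  obtain ⟨y, hyAw, hty, hy⟩ := htw.exists_adj
  have htA : t ∈ A := Finset.mem_of_mem_erase htw.mem
  have hyA : y ∈ A := Finset.mem_of_mem_erase hyAw
  have hlt : matchingNumber G ((A.erase t).erase y) < matchingNumber G A :=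
    matchingNumber_erase_erase_lt htA hyA hty
  have hyAt : IsEssential G (A.erase t) y := hlt.trans_le (not_lt.1 ht)
  obtain ⟨x, hxAt, hyx, hx⟩ := hyAt.exists_adj
  have erase_comm : ((A.erase w).erase t).erase y = ((A.erase t).erase y).erase w := by grind
  rw [erase_comm] at hy
  unfold IsEssential at htw ht hw ⊢
  refine ⟨y, hyA, x, Finset.mem_of_mem_erase hxAt, hty, hyx, by omega, by omega, fun hxw => ?_⟩
  have hedge : matchingNumber G ((((A.erase w).erase t).erase y).erase x) <
      matchingNumber G ((A.erase w).erase t) :=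
    matchingNumber_erase_erase_lt (by grind [hty.ne]) (by grind) hyx
  rw [erase_comm] at hedge
  omega

theorem not_isEssential_erase_of_color_ne {c : V → Fin 2}
    (hc : ∀ a ∈ A, ∀ b ∈ A, G.Adj a b → c a ≠ c b) (htw : c t ≠ c w)
    (ht : ¬ IsEssential G A t) (hw : ¬ IsEssential G A w) :
    ¬ IsEssential G (A.erase w) t := by
  induction A using Finset.strongInduction generalizing t with
  | H A ih =>
    intro htAw
    obtain ⟨y, hyA, x, hxA, hty, hyx, hx, hw', hxw⟩ := htAw.exists_alternating_step ht hw
    have htA : t ∈ A := Finset.mem_of_mem_erase htAw.mem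
    have hcolor : c x ≠ c w := by
      have hcty := hc t htA y hyA hty
      have hcyx := hc y hyA x hxA hyx
      omega
    have hBA : (A.erase t).erase y ⊂ A :=
      (Finset.erase_subset _ _).trans_ssubset (Finset.erase_ssubset htA)
    exact ih _ hBA (fun a ha b hb => hc a (hBA.1 ha) b (hBA.1 hb)) hcolor hx hw'
      (hxw (ne_of_apply_ne c hcolor))

theorem isEssential_of_adj_of_not_isEssential
    (hA : (G.induce (A : Set V)).Colorable 2) (htA : t ∈ A) (hwA : w ∈ A) (htw : G.Adj t w)
    (ht : ¬ IsEssential G A t) : IsEssential G A w := by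
  obtain ⟨c⟩ := hA
  let c' : V → Fin 2 := fun v => if hv : v ∈ A then c ⟨v, hv⟩ else 0
  have hc' : ∀ a ∈ A, ∀ b ∈ A, G.Adj a b → c' a ≠ c' b := by
    intro a ha b hb hab
    simpa only [c', dif_pos ha, dif_pos hb] using
      c.valid (show (G.induce (A : Set V)).Adj ⟨a, ha⟩ ⟨b, hb⟩ from hab)
  by_contra hw
  have htAw := not_isEssential_erase_of_color_ne hc' (hc' t htA w hwA htw) ht hw
  have hedge := matchingNumber_erase_erase_lt hwA htA htw.symm
  unfold IsEssential at hw htAw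
  omega

theorem IsEssential.exists_adj_not_isEssential_erase (ht : IsEssential G A t) :
    ∃ w ∈ A, G.Adj t w ∧ ¬ IsEssential G (A.erase t) w := by
  obtain ⟨w, hw, htw, heq⟩ := ht.exists_adj
  exact ⟨w, hw, htw, fun hw' => by unfold IsEssential at ht hw'; omega⟩

theorem IsEssential.not_isEssential_erase (hu : IsEssential G A u) (ht : ¬ IsEssential G A t) :
    ¬ IsEssential G (A.erase u) t := by
  have hle := matchingNumber_le_erase_add_one G (A.erase t) u
  rw [Finset.erase_right_comm] at hle
  unfold IsEssential at *
  omega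

theorem IsEssential.isEssential_erase (hw : IsEssential G A w) (hu : ¬ IsEssential G A u) :
    IsEssential G (A.erase u) w :=
  calc matchingNumber G ((A.erase u).erase w)
      ≤ matchingNumber G (A.erase w) :=
        matchingNumber_mono (Finset.erase_subset_erase w (A.erase_subset u))
    _ < matchingNumber G A := hw
    _ ≤ matchingNumber G (A.erase u) := not_lt.1 hu

theorem isEssential_erase_of_adj_of_not_isEssential
    (hA : (G.induce (A : Set V)).Colorable 2) (htA : t ∈ A) (hwA : w ∈ A) (htw : G.Adj t w)
    (hwu : w ≠ u) (ht : ¬ IsEssential G A t) : IsEssential G (A.erase u) w := by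
  by_cases hu : IsEssential G A u
  · have htu : t ≠ u := fun h => ht (h ▸ hu)
    exact isEssential_of_adj_of_not_isEssential (colorable_induce_mono (A.erase_subset u) hA)
      (Finset.mem_erase.2 ⟨htu, htA⟩) (Finset.mem_erase.2 ⟨hwu, hwA⟩) htw
      (hu.not_isEssential_erase ht)
  · exact (isEssential_of_adj_of_not_isEssential hA htA hwA htw ht).isEssential_erase hu

theorem uifN_iff_isEssential (hA : (G.induce (A : Set V)).Colorable 2) (htA : t ∈ A) :
    uifN G A t ↔ IsEssential G A t := by
  induction A using Finset.strongInduction generalizing t with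
  | H A ih =>
    have uifN_erase_iff : ∀ u ∈ A, ∀ w ∈ A, w ≠ u →
        (uifN G (A.erase u) w ↔ IsEssential G (A.erase u) w) := fun u hu w hw hwu =>
      ih _ (Finset.erase_ssubset hu) (colorable_induce_mono (A.erase_subset u) hA)
        (Finset.mem_erase.2 ⟨hwu, hw⟩)
    rw [uifN]
    constructor
    · rintro ⟨w, hw, u, hu, htw, hwu, hlose⟩
      by_contra ht
      exact hlose ((uifN_erase_iff u hu w hw hwu.ne).2
        (isEssential_erase_of_adj_of_not_isEssential hA htA hw htw hwu.ne ht))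
    · intro ht
      obtain ⟨w, hw, htw, hw'⟩ := ht.exists_adj_not_isEssential_erase
      exact ⟨w, hw, t, htA, htw, htw.symm, (uifN_erase_iff t htA w hw htw.ne').not.2 hw'⟩

theorem isEssential_iff_forall_isMaxMatching_saturates :
    IsEssential G A t ↔
      ∀ M, IsMaxMatching (G.induce (A : Set V)).spanningCoe M → Saturates M t := by
  constructor
  · intro ht M hM
    by_contra hsat
    lift M to Finset (Sym2 V) using hM.1.finite_of_spanningCoe_induce
    obtain ⟨hMA, hMG⟩ := mem_matchingsWithin.1 (isMatching_spanningCoe_induce_iff.1 hM.1)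
    obtain ⟨N, hN, hNcard⟩ := exists_card_eq_matchingNumber G A
    have hNM : N.card ≤ M.card := by
      simpa only [Set.ncard_coe_finset] using hM.2 N (isMatching_spanningCoe_induce_iff.2 hN)
    have hMt : M ∈ matchingsWithin G (A.erase t) :=
      mem_matchingsWithin.2 ⟨subset_sym2_erase_of_not_saturates hMA hsat, hMG⟩
    exact ht.not_ge (hNcard ▸ hNM.trans (card_le_matchingNumber hMt))
  · intro hsat
    by_contra ht
    obtain ⟨M, hM, hMcard⟩ := exists_card_eq_matchingNumber G (A.erase t)
    have hMt := (mem_matchingsWithin.1 hM).1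
    have hMA : M ∈ matchingsWithin G A := matchingsWithin_mono (A.erase_subset t) hM
    have hmax : IsMaxMatching (G.induce (A : Set V)).spanningCoe (M : Set (Sym2 V)) := by
      refine ⟨isMatching_spanningCoe_induce_iff.2 hMA, fun N hN => ?_⟩
      lift N to Finset (Sym2 V) using hN.finite_of_spanningCoe_induce
      simpa only [Set.ncard_coe_finset, hMcard] using
        (card_le_matchingNumber (isMatching_spanningCoe_induce_iff.1 hN)).trans (not_lt.1 ht)
    obtain ⟨e, he, hte⟩ := hsat M hmax
    exact Finset.notMem_erase t A (Finset.mem_sym2_iff.1 (hMt he) t hte)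

end

theorem uif_N_iff_saturated_by_every_maxMatching_general
    {V : Type*} [DecidableEq V] (G : SimpleGraph V) {A : Finset V}
    (hA : (G.induce (A : Set V)).Colorable 2) {t : V} (ht : t ∈ A) :
    uifN G A t ↔
      ∀ M : Set (Sym2 V), IsMaxMatching (G.induce (A : Set V)).spanningCoe M → Saturates M t :=
  (uifN_iff_isEssential hA ht).trans isEssential_iff_forall_isMaxMatching_saturates

/-- On a finite bipartite graph, the UIF position `(G, t)` is an N-position if and only if
every maximum matching of `G` saturates `t`. -/
theorem uif_N_iff_saturated_by_every_maxMatching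
    {V : Type*} [Fintype V] [DecidableEq V] (G : SimpleGraph V) (hG : G.Colorable 2) (t : V) :
    uifN G Finset.univ t ↔ ∀ M : Set (Sym2 V), IsMaxMatching G M → Saturates M t := by
  have hspan : (G.induce (Finset.univ : Finset V)).spanningCoe = G :=
    (G.spanningCoe_induce_eq_self _).2 (by simp)
  rw [uif_N_iff_saturated_by_every_maxMatching_general G
    (hG.of_hom (SimpleGraph.Embedding.induce _).toHom) (Finset.mem_univ t), hspan]
end

section
/- Let G be a finite simple bipartite graph and let t be a vertex of G. The UIF position (G, t) is an N-position if and only if the UIR position (G, t) is an N-position; that is, on bipartite graphs the games UIF and UIR have exactly the same N-positions. -/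
variable {V : Type*}

/-- N-positions of undirected impartial Geography with restricted deletion (UIR), played on
the induced subgraph of `G` on the vertex set `A` with the token on `t`: a move consists of
choosing `w ∈ A` adjacent to the token vertex `t`, moving the token to `w` and deleting `t`.
A position is an N-position iff some legal move leads to a position that is not an
N-position. -/
def uirN [DecidableEq V] (G : SimpleGraph V) : Finset V → V → Prop
  | A, t =>
    ∃ _ : t ∈ A, ∃ w ∈ A, G.Adj t w ∧ ¬ uirN G (A.erase t) w
  termination_by A _ => A.card
  decreasing_by exact Finset.card_erase_lt_of_mem ‹t ∈ A›

/-!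
The N-positions of both games are exactly the positions whose token lies in some minimum vertex
cover of the current graph `G`.

Suppose `t` lies in no minimum vertex cover, and a move goes to `w` and deletes `u`. A minimum cover
`D` of `G - u` avoiding `w` must contain `t` unless `u = t`, so `D ∪ {u}` covers `G` and contains
`t`; it is therefore not minimum, and `G - u` has the same cover number as `G`. A minimum cover of
`G` avoids `t`, hence contains `w`, and it is then also minimum for `G - u`. Either way `w` lies in
a minimum cover of `G - u`.

Suppose `t` lies in a minimum vertex cover, so that deleting `t` lowers the cover number. If every
neighbour of `t` were in a minimum cover of `G - t`, then a single one would contain them all: the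
minimum covers of a bipartite graph form a lattice, the join of `C` and `D` being `C ∪ D` on one
side and `C ∩ D` on the other, and the neighbours of `t` are all on one side. That cover would also
cover `G`, which is impossible. So moving to some neighbour of `t` and deleting `t` leads to a
position whose token is in no minimum cover.
-/

section MinVertexCover

variable {G : SimpleGraph V} {C D S s s' : Set V} {t u v w : V}

/-- `C` is a minimum vertex cover of `G`. Only `≤` is required of the cardinality, as the reverse
inequality holds for every vertex cover; if `G` has no finite vertex cover, all its vertex covers
are minimum. -/
structure IsMinVertexCover (G : SimpleGraph V) (C : Set V) : Prop where
  isVertexCover : G.IsVertexCover C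
  encard_le : C.encard ≤ G.vertexCoverNum

/-- `v` lies in some minimum vertex cover of `G`. This is the invariant that characterises the
N-positions of both games. -/
def InMinVertexCover (G : SimpleGraph V) (v : V) : Prop :=
  ∃ C, IsMinVertexCover G C ∧ v ∈ C

theorem exists_isMinVertexCover (G : SimpleGraph V) : ∃ C, IsMinVertexCover G C :=
  let ⟨C, hcard, hC⟩ := G.vertexCoverNum_exists
  ⟨C, hC, hcard.le⟩

theorem isVertexCover_insert_of_deleteIncidenceSet
    (hC : (G.deleteIncidenceSet v).IsVertexCover C) : G.IsVertexCover (insert v C) := by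
  intro a b hab
  have := @hC a b
  grind [SimpleGraph.deleteIncidenceSet_adj]

theorem isVertexCover_deleteIncidenceSet_sdiff_singleton (hC : G.IsVertexCover C) :
    (G.deleteIncidenceSet v).IsVertexCover (C \ {v}) := by
  intro a b hab
  have := @hC a b
  grind [SimpleGraph.deleteIncidenceSet_adj]

theorem isVertexCover_of_neighborSet_subset
    (hC : (G.deleteIncidenceSet v).IsVertexCover C) (hN : G.neighborSet v ⊆ C) :
    G.IsVertexCover C := by
  intro a b hab
  obtain rfl | ha := eq_or_ne a v
  · exact .inr (hN hab)
  obtain rfl | hb := eq_or_ne b v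
  · exact .inl (hN hab.symm)
  exact hC (SimpleGraph.deleteIncidenceSet_adj.2 ⟨hab, ha, hb⟩)

theorem vertexCoverNum_deleteIncidenceSet_lt (hG : G.vertexCoverNum ≠ ⊤)
    (hv : InMinVertexCover G v) : (G.deleteIncidenceSet v).vertexCoverNum < G.vertexCoverNum := by
  obtain ⟨C, hC, hvC⟩ := hv
  have hfin : C.Finite := Set.encard_ne_top_iff.1 (ne_top_of_le_ne_top hG hC.encard_le)
  calc (G.deleteIncidenceSet v).vertexCoverNum
      ≤ (C \ {v}).encard :=
        (isVertexCover_deleteIncidenceSet_sdiff_singleton hC.isVertexCover).vertexCoverNum_le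
    _ < C.encard := hfin.sdiff.encard_lt_encard (Set.sdiff_singleton_ssubset.2 hvC)
    _ ≤ G.vertexCoverNum := hC.encard_le

theorem vertexCoverNum_le_encard_of_not_inMinVertexCover (ht : ¬ InMinVertexCover G t)
    (hC : (G.deleteIncidenceSet u).IsVertexCover C) (htC : t ∈ insert u C) :
    G.vertexCoverNum ≤ C.encard := by
  have hlt : G.vertexCoverNum < (insert u C).encard := by
    by_contra! hle
    exact ht ⟨_, ⟨isVertexCover_insert_of_deleteIncidenceSet hC, hle⟩, htC⟩
  exact Order.le_of_lt_add_one (hlt.trans_le (Set.encard_insert_le C u))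

theorem inMinVertexCover_deleteIncidenceSet_of_not_inMinVertexCover
    (ht : ¬ InMinVertexCover G t) (htw : G.Adj t w) (hwu : w ≠ u) :
    InMinVertexCover (G.deleteIncidenceSet u) w := by
  obtain ⟨D, hD⟩ := exists_isMinVertexCover (G.deleteIncidenceSet u)
  by_cases hwD : w ∈ D
  · exact ⟨D, hD, hwD⟩
  have htD : t ∈ insert u D := by
    obtain rfl | htu := eq_or_ne t u
    · exact Set.mem_insert t D
    have hadj := SimpleGraph.deleteIncidenceSet_adj.2 ⟨htw, htu, hwu⟩
    exact .inr ((hD.isVertexCover hadj).resolve_right hwD)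
  have hle : G.vertexCoverNum ≤ (G.deleteIncidenceSet u).vertexCoverNum :=
    (vertexCoverNum_le_encard_of_not_inMinVertexCover ht hD.isVertexCover htD).trans hD.encard_le
  obtain ⟨C, hC⟩ := exists_isMinVertexCover G
  have hwC : w ∈ C := (hC.isVertexCover htw).resolve_left fun htC => ht ⟨C, hC, htC⟩
  exact ⟨C, ⟨hC.isVertexCover.mono (G.deleteIncidenceSet_le u), hC.encard_le.trans hle⟩, hwC⟩

theorem encard_ite_add_encard_ite (s C D : Set V) :
    (s.ite C D).encard + (s.ite D C).encard = C.encard + D.encard := by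
  have encard_ite (A B : Set V) : (s.ite A B).encard = (A ∩ s).encard + (B \ s).encard :=
    Set.encard_union_eq (Set.disjoint_sdiff_right.mono_left Set.inter_subset_right)
  rw [encard_ite, encard_ite, ← Set.encard_sdiff_add_encard_inter C s,
    ← Set.encard_sdiff_add_encard_inter D s]
  ring

theorem isVertexCover_ite_union_inter (hG : G.IsBipartiteWith s s') (hC : G.IsVertexCover C)
    (hD : G.IsVertexCover D) : G.IsVertexCover (s.ite (C ∪ D) (C ∩ D)) := by
  intro a b hab
  have hnotMem := hG.disjoint.notMem_of_mem_left
  grind [hG.mem_of_adj hab, hC hab, hD hab, Set.ite]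

theorem isVertexCover_ite_inter_union (hG : G.IsBipartiteWith s s') (hC : G.IsVertexCover C)
    (hD : G.IsVertexCover D) : G.IsVertexCover (s.ite (C ∩ D) (C ∪ D)) := by
  intro a b hab
  have hnotMem := hG.disjoint.notMem_of_mem_left
  grind [hG.mem_of_adj hab, hC hab, hD hab, Set.ite]

theorem IsMinVertexCover.ite_union_inter (hG : G.IsBipartiteWith s s')
    (hC : IsMinVertexCover G C) (hD : IsMinVertexCover G D) :
    IsMinVertexCover G (s.ite (C ∪ D) (C ∩ D)) := by
  refine ⟨isVertexCover_ite_union_inter hG hC.isVertexCover hD.isVertexCover, ?_⟩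
  obtain htop | hfin := eq_or_ne G.vertexCoverNum ⊤
  · exact htop ▸ le_top
  have hdual := isVertexCover_ite_inter_union hG hC.isVertexCover hD.isVertexCover
  refine (ENat.add_le_add_iff_right hfin).1 ?_
  calc (s.ite (C ∪ D) (C ∩ D)).encard + G.vertexCoverNum
      ≤ (s.ite (C ∪ D) (C ∩ D)).encard + (s.ite (C ∩ D) (C ∪ D)).encard := by
        gcongr; exact hdual.vertexCoverNum_le
    _ = C.encard + D.encard := by
        rw [encard_ite_add_encard_ite, Set.encard_union_add_encard_inter]
    _ ≤ G.vertexCoverNum + G.vertexCoverNum := add_le_add hC.encard_le hD.encard_le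

theorem exists_isMinVertexCover_superset (hG : G.IsBipartiteWith s s') (hS : S.Finite)
    (hSs : S ⊆ s) (hmin : ∀ v ∈ S, InMinVertexCover G v) :
    ∃ C, IsMinVertexCover G C ∧ S ⊆ C := by
  induction S, hS using Set.Finite.induction_on with
  | empty =>
    obtain ⟨C, hC⟩ := exists_isMinVertexCover G
    exact ⟨C, hC, Set.empty_subset C⟩
  | @insert v S _ _ ih =>
    rw [Set.insert_subset_iff] at hSs
    rw [Set.forall_mem_insert] at hmin
    obtain ⟨C, hC, hSC⟩ := ih hSs.2 hmin.2
    obtain ⟨D, hD, hvD⟩ := hmin.1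
    refine ⟨_, hC.ite_union_inter hG hD, Set.insert_subset ?_ fun x hx => ?_⟩
    · exact .inl ⟨.inr hvD, hSs.1⟩
    · exact .inl ⟨.inl (hSC hx), hSs.2 hx⟩

theorem exists_isBipartiteWith_neighborSet_subset (hG : G.IsBipartite) (v : V) :
    ∃ s s', G.IsBipartiteWith s s' ∧ G.neighborSet v ⊆ s := by
  obtain ⟨s, s', hss'⟩ := SimpleGraph.isBipartite_iff_exists_isBipartiteWith.1 hG
  by_cases hv : v ∈ s
  · exact ⟨s', s, hss'.symm, SimpleGraph.isBipartiteWith_neighborSet_subset hss' hv⟩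
  · refine ⟨s, s', hss', fun w hvw => ?_⟩
    obtain ⟨hvs, -⟩ | ⟨-, hws⟩ := hss'.mem_of_adj hvw
    exacts [absurd hvs hv, hws]

theorem exists_adj_not_inMinVertexCover_deleteIncidenceSet (hG : G.IsBipartite)
    (hfin : G.vertexCoverNum ≠ ⊤) (hN : (G.neighborSet t).Finite) (ht : InMinVertexCover G t) :
    ∃ w, G.Adj t w ∧ ¬ InMinVertexCover (G.deleteIncidenceSet t) w := by
  by_contra! hmin
  obtain ⟨s, s', hss', hNs⟩ := exists_isBipartiteWith_neighborSet_subset hG t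
  have hdel : (G.deleteIncidenceSet t).IsBipartiteWith s s' :=
    ⟨hss'.disjoint, fun _ _ hab => hss'.mem_of_adj (G.deleteIncidenceSet_le t hab)⟩
  obtain ⟨C, hC, hNC⟩ := exists_isMinVertexCover_superset hdel hN hNs hmin
  have hle : G.vertexCoverNum ≤ (G.deleteIncidenceSet t).vertexCoverNum :=
    (isVertexCover_of_neighborSet_subset hC.isVertexCover hNC).vertexCoverNum_le.trans hC.encard_le
  exact hle.not_gt (vertexCoverNum_deleteIncidenceSet_lt hfin ht)

end MinVertexCover

section Game

variable {G : SimpleGraph V} {A : Finset V} {t w : V}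

/-- The graph of the position with remaining vertices `A`: the subgraph of `G` induced on `A`. It is
kept on the vertex type `V`, so that the deleted vertices become isolated. -/
def remainingGraph (G : SimpleGraph V) (A : Finset V) : SimpleGraph V :=
  (G.induce (A : Set V)).spanningCoe

theorem remainingGraph_adj : (remainingGraph G A).Adj t w ↔ G.Adj t w ∧ t ∈ A ∧ w ∈ A := by
  simp [remainingGraph]

theorem remainingGraph_erase [DecidableEq V] (u : V) :
    remainingGraph G (A.erase u) = (remainingGraph G A).deleteIncidenceSet u := by
  ext a b
  grind [SimpleGraph.deleteIncidenceSet_adj, remainingGraph_adj]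

theorem vertexCoverNum_remainingGraph_ne_top : (remainingGraph G A).vertexCoverNum ≠ ⊤ := by
  have hA : (remainingGraph G A).IsVertexCover A := fun _ _ hab =>
    .inl (remainingGraph_adj.1 hab).2.1
  exact ne_top_of_le_ne_top A.finite_toSet.encard_lt_top.ne hA.vertexCoverNum_le

theorem finite_neighborSet_remainingGraph : ((remainingGraph G A).neighborSet t).Finite :=
  A.finite_toSet.subset fun _ hadj => (remainingGraph_adj.1 hadj).2.2

-- `N` may be the set of N-positions for any deletion rule between the restricted and the free one.
theorem nPosition_iff_inMinVertexCover [DecidableEq V] {N : Finset V → V → Prop}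
    (restricted : ∀ A, ∀ t ∈ A, ∀ w ∈ A, G.Adj t w → ¬ N (A.erase t) w → N A t)
    (free : ∀ A, ∀ t ∈ A, N A t →
      ∃ w ∈ A, ∃ u ∈ A, G.Adj t w ∧ G.Adj w u ∧ ¬ N (A.erase u) w)
    (hG : (remainingGraph G A).IsBipartite) (ht : t ∈ A) :
    N A t ↔ InMinVertexCover (remainingGraph G A) t := by
  induction A using Finset.strongInduction generalizing t with
  | H A ih =>
    have option_iff {u w : V} (hu : u ∈ A) (hw : w ∈ A) (hwu : w ≠ u) :
        N (A.erase u) w ↔ InMinVertexCover ((remainingGraph G A).deleteIncidenceSet u) w := by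
      rw [← remainingGraph_erase]
      refine ih _ (Finset.erase_ssubset hu) ?_ (Finset.mem_erase.2 ⟨hwu, hw⟩)
      rw [remainingGraph_erase]
      exact hG.mono_left (SimpleGraph.deleteIncidenceSet_le _ u)
    constructor
    · intro hN
      obtain ⟨w, hw, u, hu, htw, hwu, hnot⟩ := free A t ht hN
      by_contra htmin
      exact hnot <| (option_iff hu hw hwu.ne).2 <|
        inMinVertexCover_deleteIncidenceSet_of_not_inMinVertexCover htmin
          (remainingGraph_adj.2 ⟨htw, ht, hw⟩) hwu.ne
    · intro htmin
      obtain ⟨w, hadj, hwmin⟩ := exists_adj_not_inMinVertexCover_deleteIncidenceSet hG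
        vertexCoverNum_remainingGraph_ne_top finite_neighborSet_remainingGraph htmin
      obtain ⟨htw, -, hw⟩ := remainingGraph_adj.1 hadj
      exact restricted A t ht w hw htw (mt (option_iff ht hw htw.ne').1 hwmin)

theorem uifN_iff_inMinVertexCover [DecidableEq V] (hG : (remainingGraph G A).IsBipartite)
    (ht : t ∈ A) : uifN G A t ↔ InMinVertexCover (remainingGraph G A) t := by
  refine nPosition_iff_inMinVertexCover (fun A t ht w hw htw hnot => ?_) (fun A t _ hN => ?_) hG ht
  · rw [uifN]
    exact ⟨w, hw, t, ht, htw, htw.symm, hnot⟩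
  · rw [uifN] at hN
    obtain ⟨w, hw, u, hu, hmove⟩ := hN
    exact ⟨w, hw, u, hu, hmove⟩

theorem uirN_iff_inMinVertexCover [DecidableEq V] (hG : (remainingGraph G A).IsBipartite)
    (ht : t ∈ A) : uirN G A t ↔ InMinVertexCover (remainingGraph G A) t := by
  refine nPosition_iff_inMinVertexCover (fun A t ht w hw htw hnot => ?_) (fun A t _ hN => ?_) hG ht
  · rw [uirN]
    exact ⟨ht, w, hw, htw, hnot⟩
  · rw [uirN] at hN
    obtain ⟨ht, w, hw, htw, hnot⟩ := hN
    exact ⟨w, hw, t, ht, htw, htw.symm, hnot⟩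

theorem uif_N_iff_uir_N_of_bipartite_general [DecidableEq V]
    (hG : (G.induce (A : Set V)).IsBipartite) (ht : t ∈ A) : uifN G A t ↔ uirN G A t := by
  have hA : (remainingGraph G A).IsBipartite := hG.map _
  rw [uifN_iff_inMinVertexCover hA ht, uirN_iff_inMinVertexCover hA ht]

end Game

/-- On finite bipartite graphs, the games UIF and UIR have exactly the same N-positions. -/
theorem uif_N_iff_uir_N_of_bipartite
    {V : Type*} [Fintype V] [DecidableEq V] (G : SimpleGraph V) (hG : G.Colorable 2) (t : V) :
    uifN G Finset.univ t ↔ uirN G Finset.univ t :=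
  uif_N_iff_uir_N_of_bipartite_general (hG.of_hom (SimpleGraph.Embedding.induce _).toHom)
    (Finset.mem_univ t)
end

section
/- Let G be a finite simple graph, let M1 and M2 be maximum matchings of G, and let S be a set of vertices of G such that every edge of M1 ∪ M2 has both endpoints in S or both endpoints outside S. Then the matching M consisting of the edges of M1 with both endpoints in S together with the edges of M2 with both endpoints outside S is a maximum matching of G (in particular, it has the same cardinality as M2). -/
variable {V : Type*}

/-!
Gluing the two matchings in the opposite order gives another matching, and the two glued matchings
together use each edge of `M1` and of `M2` exactly once. Their sizes therefore add up to
`|M1| + |M2|`; as neither exceeds the maximum, both attain it. Although `Set.ncard` is `0` on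
infinite sets, every `ncard` here is a true count: an infinite matching would contain finite
matchings of every size, so a graph with a maximum matching has none.
-/

variable {G : SimpleGraph V} {M N : Set (Sym2 V)} {S T : Set V}

theorem IsMatching.subset (hM : IsMatching G M) (hNM : N ⊆ M) : IsMatching G N :=
  ⟨hNM.trans hM.1, hM.2.mono hNM⟩

theorem IsMatching.union (hM : IsMatching G M) (hN : IsMatching G N)
    (hMN : ∀ e ∈ M, ∀ f ∈ N, ∀ v ∈ e, v ∉ f) : IsMatching G (M ∪ N) := by
  refine ⟨Set.union_subset hM.1 hN.1, Set.pairwise_union.2 ⟨hM.2, hN.2, ?_⟩⟩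
  exact fun e he f hf _ => ⟨hMN e he f hf, fun v hvf hve => hMN e he f hf v hve hvf⟩

theorem IsMaxMatching.finite_of_isMatching (hM : IsMaxMatching G M) (hN : IsMatching G N) :
    N.Finite := by
  by_contra hinf
  obtain ⟨K, hKN, -, hKcard⟩ := Set.Infinite.exists_subset_ncard_eq hinf (M.ncard + 1)
  have hKM : K.ncard ≤ M.ncard := hM.2 K (hN.subset hKN)
  omega

theorem IsMaxMatching.of_ncard_eq (hM : IsMaxMatching G M) (hN : IsMatching G N)
    (hcard : N.ncard = M.ncard) : IsMaxMatching G N :=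
  ⟨hN, fun K hK => hcard ▸ hM.2 K hK⟩

/-- The edges of `M` induced by `S`, that is, those with both endpoints in `S`. -/
def edgesWithin (M : Set (Sym2 V)) (S : Set V) : Set (Sym2 V) :=
  {e ∈ M | ∀ v ∈ e, v ∈ S}

theorem edgesWithin_subset : edgesWithin M S ⊆ M :=
  Set.sep_subset _ _

theorem notMem_of_mem_edgesWithin_of_disjoint (hST : Disjoint S T) {e f : Sym2 V}
    (he : e ∈ edgesWithin M S) (hf : f ∈ edgesWithin N T) {v : V} (hv : v ∈ e) : v ∉ f :=
  fun hvf => Set.disjoint_left.1 hST (he.2 v hv) (hf.2 v hvf)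

theorem disjoint_edgesWithin (hST : Disjoint S T) :
    Disjoint (edgesWithin M S) (edgesWithin N T) :=
  Set.disjoint_left.2 fun e he hf =>
    notMem_of_mem_edgesWithin_of_disjoint hST he hf e.out_fst_mem e.out_fst_mem

/-- The edges of `M` inside `S` together with the edges of `N` inside the complement of `S`. -/
def glue (M N : Set (Sym2 V)) (S : Set V) : Set (Sym2 V) :=
  edgesWithin M S ∪ edgesWithin N Sᶜ

theorem IsMatching.glue (hM : IsMatching G M) (hN : IsMatching G N) (S : Set V) :
    IsMatching G (glue M N S) :=
  (hM.subset edgesWithin_subset).union (hN.subset edgesWithin_subset) fun _ he _ hf _ =>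
    notMem_of_mem_edgesWithin_of_disjoint disjoint_compl_right he hf

theorem glue_self (hS : ∀ e ∈ M, (∀ v ∈ e, v ∈ S) ∨ (∀ v ∈ e, v ∉ S)) : glue M M S = M :=
  (Set.union_subset edgesWithin_subset edgesWithin_subset).antisymm fun e he =>
    (hS e he).imp (⟨he, ·⟩) (⟨he, ·⟩)

theorem ncard_glue (hM : M.Finite) (hN : N.Finite) (S : Set V) :
    (glue M N S).ncard = (edgesWithin M S).ncard + (edgesWithin N Sᶜ).ncard :=
  Set.ncard_union_eq (disjoint_edgesWithin disjoint_compl_right)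
    (hM.subset edgesWithin_subset) (hN.subset edgesWithin_subset)

theorem ncard_glue_add_ncard_glue_swap (hM : M.Finite) (hN : N.Finite)
    (hS : ∀ e ∈ M ∪ N, (∀ v ∈ e, v ∈ S) ∨ (∀ v ∈ e, v ∉ S)) :
    (glue M N S).ncard + (glue N M S).ncard = M.ncard + N.ncard :=
  calc (glue M N S).ncard + (glue N M S).ncard
    _ = (glue M M S).ncard + (glue N N S).ncard := by
      rw [ncard_glue hM hN, ncard_glue hN hM, ncard_glue hM hM, ncard_glue hN hN]
      ring
    _ = M.ncard + N.ncard := by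
      rw [glue_self fun e he => hS e (.inl he), glue_self fun e he => hS e (.inr he)]

theorem isMaxMatching_glue_general (hM : IsMaxMatching G M) (hN : IsMaxMatching G N)
    (hS : ∀ e ∈ M ∪ N, (∀ v ∈ e, v ∈ S) ∨ (∀ v ∈ e, v ∉ S)) :
    IsMaxMatching G (glue M N S) ∧ (glue M N S).ncard = N.ncard := by
  have hglue : IsMatching G (glue M N S) := hM.1.glue hN.1 S
  have hcard : (glue M N S).ncard = N.ncard := by
    have hsum := ncard_glue_add_ncard_glue_swap
      (hM.finite_of_isMatching hM.1) (hN.finite_of_isMatching hN.1) hS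
    have hle : (glue M N S).ncard ≤ N.ncard := hN.2 _ hglue
    have hle_swap : (glue N M S).ncard ≤ M.ncard := hM.2 _ (hN.1.glue hM.1 S)
    omega
  exact ⟨hN.of_ncard_eq hglue hcard, hcard⟩

/-- If `M1` and `M2` are maximum matchings of `G` and `S` is a set of vertices such that
every edge of `M1 ∪ M2` has both endpoints in `S` or both endpoints outside `S`, then the
edges of `M1` with both endpoints in `S` together with the edges of `M2` with both endpoints
outside `S` form a maximum matching of `G`, of the same cardinality as `M2`. -/
theorem isMaxMatching_glue
    {V : Type*} [Fintype V] (G : SimpleGraph V) (M1 M2 : Set (Sym2 V))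
    (h1 : IsMaxMatching G M1) (h2 : IsMaxMatching G M2) (S : Set V)
    (hS : ∀ e ∈ M1 ∪ M2, (∀ v ∈ e, v ∈ S) ∨ (∀ v ∈ e, v ∉ S)) :
    IsMaxMatching G ({e ∈ M1 | ∀ v ∈ e, v ∈ S} ∪ {e ∈ M2 | ∀ v ∈ e, v ∉ S}) ∧
      ({e ∈ M1 | ∀ v ∈ e, v ∈ S} ∪ {e ∈ M2 | ∀ v ∈ e, v ∉ S}).ncard = M2.ncard :=
  isMaxMatching_glue_general h1 h2 hS
end

section
/- Let G5 be the simple graph on the five vertices v, x, w, u, t with edge set {vx, vw, xw, wu, ut}, with the token on v. Then (G5, v) is not an N-position of the game UIR, but (G5, v) is an N-position of the game UIF (a winning first move being: move the token to w and delete u). -/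
variable {V : Type*}

/-- The graph `G5` on the five vertices `v = 0`, `x = 1`, `w = 2`, `u = 3`, `t = 4`, with
edge set `{vx, vw, xw, wu, ut}`: a triangle `v, x, w` with a pendant path `w–u–t`. -/
def G5 : SimpleGraph (Fin 5) :=
  SimpleGraph.fromEdgeSet {s(0, 1), s(0, 2), s(1, 2), s(2, 3), s(3, 4)}

/-!
In UIR a player owning a maximum matching `M` that misses the token always replies along `M`: by
maximality every vertex the opponent can reach is matched, and after the exchange what is left of
`M` is again a maximum matching missing the token. In `G5` the matching `{xw, ut}` misses `v`.

In UIF, as long as the token lies in a component that is complete, every move stays in the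
component and deletes one of its vertices, so the outcome is decided by the parity of its size.
Moving from `v` to `w` and deleting `u` confines the token to the triangle `v, x, w`.
-/

section Matching

variable {G : SimpleGraph V} {M : G.Subgraph} {v w : V}

theorem isMatching_sup_subgraphOfAdj (hM : M.IsMatching) (hvw : G.Adj v w)
    (hv : v ∉ M.verts) (hw : w ∉ M.verts) : (M ⊔ G.subgraphOfAdj hvw).IsMatching := by
  refine hM.sup (.subgraphOfAdj hvw) ?_
  rw [hM.support_eq_verts, SimpleGraph.support_subgraphOfAdj, Set.disjoint_right]
  rintro a (rfl | rfl)
  exacts [hv, hw]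

theorem ncard_verts_sup_subgraphOfAdj (hfin : M.verts.Finite) (hvw : G.Adj v w)
    (hv : v ∉ M.verts) (hw : w ∉ M.verts) :
    (M ⊔ G.subgraphOfAdj hvw).verts.ncard = M.verts.ncard + 2 := by
  have hdisj : Disjoint M.verts {v, w} := by simp [hv, hw]
  rw [SimpleGraph.Subgraph.verts_sup, SimpleGraph.subgraphOfAdj_verts,
    Set.ncard_union_eq hdisj hfin, Set.ncard_pair hvw.ne]

theorem isMatching_deleteVerts_pair (hM : M.IsMatching) (hvw : M.Adj v w) :
    (M.deleteVerts {v, w}).IsMatching := by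
  rintro a ⟨haM, ha⟩
  obtain ⟨b, hab, hb_unique⟩ := hM haM
  have hb : b ∉ ({v, w} : Set V) := by
    rintro (rfl | rfl)
    · exact ha (.inr (hM.eq_of_adj_left hab.symm hvw))
    · exact ha (.inl (hM.eq_of_adj_right hab hvw))
  refine ⟨b, SimpleGraph.Subgraph.deleteVerts_adj.2 ⟨haM, ha, hab.snd_mem, hb, hab⟩, ?_⟩
  exact fun c hac => hb_unique c (SimpleGraph.Subgraph.deleteVerts_adj.1 hac).2.2.2.2

theorem even_ncard_verts_of_isMatching (hM : M.IsMatching) (hfin : M.verts.Finite) :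
    Even M.verts.ncard := by
  have := hfin.fintype
  rw [Set.ncard_eq_toFinset_card']
  exact hM.even_card

end Matching

/-- `M` is a maximum matching of the subgraph of `G` induced on `A`. The vertices of a matching are
exactly its matched vertices, so size is measured by their number. -/
structure IsMaximumMatchingOn {G : SimpleGraph V} (A : Finset V) (M : G.Subgraph) : Prop where
  isMatching : M.IsMatching
  verts_subset : M.verts ⊆ A
  ncard_verts_le : ∀ N : G.Subgraph, N.IsMatching → N.verts ⊆ A → N.verts.ncard ≤ M.verts.ncard

namespace IsMaximumMatchingOn

variable {G : SimpleGraph V} {A : Finset V} {M : G.Subgraph} {t w w' : V}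

theorem mem_verts_of_adj (hM : IsMaximumMatchingOn A M) (htA : t ∈ A) (htM : t ∉ M.verts)
    (hwA : w ∈ A) (htw : G.Adj t w) : w ∈ M.verts := by
  by_contra hwM
  have hfin : M.verts.Finite := A.finite_toSet.subset hM.verts_subset
  have hle := hM.ncard_verts_le _ (isMatching_sup_subgraphOfAdj hM.isMatching htw htM hwM)
    (Set.union_subset hM.verts_subset (Set.pair_subset htA hwA))
  rw [ncard_verts_sup_subgraphOfAdj hfin htw htM hwM] at hle
  lia

variable [DecidableEq V]

theorem deleteVerts_pair (hM : IsMaximumMatchingOn A M) (htA : t ∈ A) (htM : t ∉ M.verts)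
    (hwA : w ∈ A) (htw : G.Adj t w) (hww' : M.Adj w w') :
    IsMaximumMatchingOn ((A.erase t).erase w) (M.deleteVerts {w, w'}) where
  isMatching := isMatching_deleteVerts_pair hM.isMatching hww'
  verts_subset := by
    rintro a ⟨haM, ha⟩
    have hat : a ≠ t := fun h => htM (h ▸ haM)
    have haw : a ≠ w := fun h => ha (.inl h)
    simpa [hat, haw] using hM.verts_subset haM
  ncard_verts_le N hN hNA := by
    have htN : t ∉ N.verts := fun h => by simpa using hNA h
    have hwN : w ∉ N.verts := fun h => by simpa using hNA h
    have hNA' : N.verts ⊆ A :=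
      fun a ha => Finset.mem_of_mem_erase (Finset.mem_of_mem_erase (hNA ha))
    have hle := hM.ncard_verts_le _ (isMatching_sup_subgraphOfAdj hN htw htN hwN)
      (Set.union_subset hNA' (Set.pair_subset htA hwA))
    rw [ncard_verts_sup_subgraphOfAdj (A.finite_toSet.subset hNA') htw htN hwN] at hle
    have hpair : {w, w'} ⊆ M.verts := Set.pair_subset hww'.fst_mem hww'.snd_mem
    rw [SimpleGraph.Subgraph.deleteVerts_verts, Set.ncard_sdiff hpair, Set.ncard_pair hww'.ne]
    lia

theorem of_verts_eq_erase (hM : M.IsMatching) (hverts : M.verts = A.erase t) :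
    IsMaximumMatchingOn A M where
  isMatching := hM
  verts_subset := hverts ▸ Finset.coe_subset.2 (A.erase_subset t)
  ncard_verts_le N hN hNA := by
    have hN_le : N.verts.ncard ≤ A.card := by
      simpa only [Set.ncard_coe_finset] using Set.ncard_le_ncard hNA
    have hM_le : A.card - 1 ≤ M.verts.ncard := by
      rw [hverts, Set.ncard_coe_finset]
      exact Finset.pred_card_le_card_erase
    obtain ⟨m, hm⟩ := even_ncard_verts_of_isMatching hM (hverts ▸ Finset.finite_toSet _)
    obtain ⟨n, hn⟩ := even_ncard_verts_of_isMatching hN (A.finite_toSet.subset hNA)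
    lia

theorem not_uirN (hM : IsMaximumMatchingOn A M) (htM : t ∉ M.verts) : ¬ uirN G A t := by
  induction A using Finset.strongInduction generalizing M t with
  | H A ih =>
    rw [uirN]
    rintro ⟨htA, w, hwA, htw, hw_not_N⟩
    obtain ⟨w', hww', -⟩ := hM.isMatching (hM.mem_verts_of_adj htA htM hwA htw)
    have hwAt : w ∈ A.erase t := Finset.mem_erase.2 ⟨htw.ne', hwA⟩
    have hw'At : w' ∈ A.erase t :=
      Finset.mem_erase.2 ⟨fun h => htM (h ▸ hww'.snd_mem), hM.verts_subset hww'.snd_mem⟩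
    have hssub : (A.erase t).erase w ⊂ A :=
      (Finset.erase_ssubset hwAt).trans (Finset.erase_ssubset htA)
    have hreply : ¬ uirN G ((A.erase t).erase w) w' :=
      ih _ hssub (hM.deleteVerts_pair htA htM hwA htw hww') fun h => h.2 (.inr rfl)
    rw [uirN] at hw_not_N
    exact hw_not_N ⟨hwAt, w', hw'At, hww'.adj_sub, hreply⟩

end IsMaximumMatchingOn

/-- `C` is a complete connected component of the subgraph of `G` induced on `A` (or empty): from
a vertex of `C`, the neighbours within `A` are exactly the other vertices of `C`. -/
def IsCliqueComponent (G : SimpleGraph V) (A C : Finset V) : Prop :=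
  C ⊆ A ∧ ∀ a ∈ C, ∀ b ∈ A, G.Adj a b ↔ b ∈ C ∧ b ≠ a

namespace IsCliqueComponent

variable [DecidableEq V] {G : SimpleGraph V} {A C : Finset V} {t : V}

theorem erase (hC : IsCliqueComponent G A C) (u : V) :
    IsCliqueComponent G (A.erase u) (C.erase u) := by
  refine ⟨Finset.erase_subset_erase u hC.1, fun a ha b hb => ?_⟩
  obtain ⟨hbu, hbA⟩ := Finset.mem_erase.1 hb
  rw [hC.2 a (Finset.mem_of_mem_erase ha) b hbA, Finset.mem_erase, and_iff_right hbu]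

theorem uifN_iff_even_card (hC : IsCliqueComponent G A C) (ht : t ∈ C) :
    uifN G A t ↔ Even C.card := by
  induction C using Finset.strongInduction generalizing A t with
  | H C ih =>
    have outcome {u w : V} (hu : u ∈ C) (hw : w ∈ C) (hwu : w ≠ u) :
        ¬ uifN G (A.erase u) w ↔ Even C.card := by
      rw [ih _ (Finset.erase_ssubset hu) (hC.erase u) (Finset.mem_erase.2 ⟨hwu, hw⟩),
        ← Finset.card_erase_add_one hu, Nat.even_add_one]
    rw [uifN]
    constructor
    · rintro ⟨w, hwA, u, huA, htw, hwu, hP⟩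
      have hw : w ∈ C := ((hC.2 t ht w hwA).1 htw).1
      have hu : u ∈ C := ((hC.2 w hw u huA).1 hwu).1
      exact (outcome hu hw hwu.ne).1 hP
    · intro heven
      have hcard : 1 < C.card := by
        have := Finset.card_pos.2 ⟨t, ht⟩
        obtain ⟨k, hk⟩ := heven
        lia
      obtain ⟨w, hw, hwt⟩ := Finset.exists_mem_ne hcard t
      have htw : G.Adj t w := (hC.2 t ht w (hC.1 hw)).2 ⟨hw, hwt⟩
      exact ⟨w, hC.1 hw, t, hC.1 ht, htw, htw.symm, (outcome ht hw hwt).2 heven⟩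

end IsCliqueComponent

section G5

instance : DecidableRel G5.Adj :=
  inferInstanceAs (DecidableRel (SimpleGraph.fromEdgeSet _).Adj)

theorem exists_isMatching_G5_verts_eq_erase_zero :
    ∃ M : G5.Subgraph, M.IsMatching ∧ M.verts = (Finset.univ.erase 0 : Finset (Fin 5)) := by
  have hxw : G5.Adj 1 2 := by decide
  have hut : G5.Adj 3 4 := by decide
  refine ⟨G5.subgraphOfAdj hxw ⊔ G5.subgraphOfAdj hut, ?_, ?_⟩
  · exact isMatching_sup_subgraphOfAdj (.subgraphOfAdj hxw) hut (by simp) (by simp)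
  · ext a
    fin_cases a <;> simp

theorem isCliqueComponent_G5_triangle :
    IsCliqueComponent G5 (Finset.univ.erase 3) {0, 1, 2} := by
  unfold IsCliqueComponent
  decide

end G5

/-- With the token on `v = 0`, the position `(G5, v)` is not an N-position of UIR, but it is
an N-position of UIF; a winning first move in UIF is to move the token to `w = 2` and delete
`u = 3`. -/
theorem G5_P_position_uir_N_position_uif :
    ¬ uirN G5 Finset.univ 0 ∧ uifN G5 Finset.univ 0 ∧
      ¬ uifN G5 (Finset.univ.erase 3) 2 := by
  have uif_P : ¬ uifN G5 (Finset.univ.erase 3) 2 := by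
    rw [isCliqueComponent_G5_triangle.uifN_iff_even_card (by decide)]
    decide
  refine ⟨?_, ?_, uif_P⟩
  · obtain ⟨M, hM, hverts⟩ := exists_isMatching_G5_verts_eq_erase_zero
    exact (IsMaximumMatchingOn.of_verts_eq_erase hM hverts).not_uirN (by simp [hverts])
  · rw [uifN]
    exact ⟨2, Finset.mem_univ _, 3, Finset.mem_univ _, by decide, by decide, uif_P⟩
end
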